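/- Let X be a real normed vector space with von Neumann–Jordan constant at most ε + 1. Then for all x, y ∈ X and all t ∈ ℝ, |[t·x, y] − t·[x, y]| ≤ max{1, t²}·ε·[(8 + 7ε)‖x‖² + (20 + 20ε)‖y‖²]. -/

import Mathlib

/-!
For fixed `x` and `y`, the homogeneity defect `g t = [t • x, y] - t * [x, y]` vanishes at `0` and
`1`, and the approximate parallelogram law bounds its symmetric second differences on `[0, 1]` by
some `D`. Let `|g|` be maximal on `[0, 1]` at `c`, and take the largest `e` for which `c - e` and
`c + e` stay in `[0, 1]`. One of the two is an endpoint, where `g = 0`, so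
`2 * |g c| ≤ |g c| + D`, that is, `|g| ≤ D` on `[0, 1]`. As `[t • x, y] = t ^ 2 * [t⁻¹ • y, x]`,
exchanging `x` and `y` handles `t ≥ 1`, and `g` is odd.
-/

open Set

theorem norm_le_of_norm_second_difference_le {E : Type*} [SeminormedAddCommGroup E]
    [NormedSpace ℝ E] {f : ℝ → E} {a b D : ℝ} (hf : ContinuousOn f (Icc a b))
    (ha : f a = 0) (hb : f b = 0)
    (hD : ∀ c e, c - e ∈ Icc a b → c + e ∈ Icc a b →
      ‖f (c - e) + f (c + e) - (2 : ℝ) • f c‖ ≤ D)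
    {s : ℝ} (hs : s ∈ Icc a b) : ‖f s‖ ≤ D := by
  obtain ⟨c, hc, hmax⟩ := isCompact_Icc.exists_isMaxOn ⟨s, hs⟩ hf.norm
  refine (hmax hs).trans ?_
  have le_of_endpoint {v : E} (hv : ‖v‖ ≤ ‖f c‖) (h : ‖v - (2 : ℝ) • f c‖ ≤ D) : ‖f c‖ ≤ D := by
    have htwo : ‖(2 : ℝ) • f c‖ = 2 * ‖f c‖ := by rw [norm_smul, Real.norm_two]
    linarith [norm_sub_norm_le ((2 : ℝ) • f c) v, norm_sub_rev ((2 : ℝ) • f c) v]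
  have hab : a ≤ b := hc.1.trans hc.2
  rcases le_total (c - a) (b - c) with hca | hcb
  · have hmem : c + (c - a) ∈ Icc a b := ⟨by linarith [hc.1], by linarith⟩
    refine le_of_endpoint (hmax hmem) ?_
    simpa [ha] using hD c (c - a) (by simpa using hab) hmem
  · have hmem : c - (b - c) ∈ Icc a b := ⟨by linarith, by linarith [hc.2]⟩
    refine le_of_endpoint (hmax hmem) ?_
    simpa [hb] using hD c (b - c) hmem (by simpa using hab)

/-- `IsNeumannJordanBound X M` says that the von Neumann–Jordan constant of `X` is at most `M`.
Only the upper estimate is recorded, with denominators cleared; the lower one follows from it by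
passing from `(a, b)` to `(a + b, a - b)`. -/
def IsNeumannJordanBound (X : Type*) [SeminormedAddCommGroup X] (M : ℝ) : Prop :=
  ∀ a b : X, ‖a + b‖ ^ 2 + ‖a - b‖ ^ 2 ≤ 2 * M * (‖a‖ ^ 2 + ‖b‖ ^ 2)

theorem IsNeumannJordanBound.of_div_le {X : Type*} [NormedAddCommGroup X] {M : ℝ}
    (h : ∀ a b : X, ¬(a = 0 ∧ b = 0) →
      (‖a + b‖ ^ 2 + ‖a - b‖ ^ 2) / (2 * (‖a‖ ^ 2 + ‖b‖ ^ 2)) ≤ M) :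
    IsNeumannJordanBound X M := by
  intro a b
  by_cases hab : a = 0 ∧ b = 0
  · simp [hab.1, hab.2]
  · have hpos : 0 < 2 * (‖a‖ ^ 2 + ‖b‖ ^ 2) := by
      rcases not_and_or.mp hab with ha | hb
      · have := norm_pos_iff.mpr ha
        positivity
      · have := norm_pos_iff.mpr hb
        positivity
    linarith [(div_le_iff₀ hpos).mp (h a b hab)]

section Bracket

variable {X : Type*} [SeminormedAddCommGroup X]

/-- The bracket `[a, b]` of the paper, which is `4 * ⟪a, b⟫` when the norm comes from an inner
product. -/
def normBracket (a b : X) : ℝ :=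
  ‖a + b‖ ^ 2 - ‖a - b‖ ^ 2

theorem normBracket_comm (a b : X) : normBracket a b = normBracket b a := by
  rw [normBracket, normBracket, add_comm, norm_sub_rev]

@[simp]
theorem normBracket_zero_left (b : X) : normBracket 0 b = 0 := by
  simp [normBracket]

@[simp]
theorem normBracket_neg_left (a b : X) : normBracket (-a) b = -normBracket a b := by
  rw [normBracket, normBracket, neg_add_eq_sub, norm_sub_rev b a, ← neg_add', norm_neg, neg_sub]

variable [NormedSpace ℝ X]

theorem normBracket_smul_smul (t : ℝ) (a b : X) :
    normBracket (t • a) (t • b) = t ^ 2 * normBracket a b := by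
  simp only [normBracket, ← smul_add, ← smul_sub, norm_smul, mul_pow, Real.norm_eq_abs, sq_abs,
    mul_sub]

/-- The failure `[t • x, y] - t * [x, y]` of the bracket to be homogeneous in its first argument. -/
def homogeneityDefect (x y : X) (t : ℝ) : ℝ :=
  normBracket (t • x) y - t * normBracket x y

theorem continuous_homogeneityDefect (x y : X) : Continuous (homogeneityDefect x y) := by
  unfold homogeneityDefect normBracket
  fun_prop

@[simp]
theorem homogeneityDefect_zero (x y : X) : homogeneityDefect x y 0 = 0 := by
  simp [homogeneityDefect]

@[simp]
theorem homogeneityDefect_one (x y : X) : homogeneityDefect x y 1 = 0 := by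
  simp [homogeneityDefect]

theorem homogeneityDefect_neg (x y : X) (t : ℝ) :
    homogeneityDefect x y (-t) = -homogeneityDefect x y t := by
  simp only [homogeneityDefect, neg_smul, normBracket_neg_left]
  ring

theorem homogeneityDefect_eq_sq_mul_inv (x y : X) {t : ℝ} (ht : t ≠ 0) :
    homogeneityDefect x y t = t ^ 2 * homogeneityDefect y x t⁻¹ := by
  have hswap : normBracket (t • x) y = t ^ 2 * normBracket (t⁻¹ • y) x := by
    rw [normBracket_comm (t⁻¹ • y), ← normBracket_smul_smul, smul_inv_smul₀ ht]
  rw [homogeneityDefect, homogeneityDefect, hswap, normBracket_comm x y]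
  field_simp

end Bracket

namespace IsNeumannJordanBound

variable {X : Type*} [SeminormedAddCommGroup X] [NormedSpace ℝ X] {M : ℝ}

theorem two_mul_le (h : IsNeumannJordanBound X M) (a b : X) :
    2 * (‖a‖ ^ 2 + ‖b‖ ^ 2) ≤ M * (‖a + b‖ ^ 2 + ‖a - b‖ ^ 2) := by
  have hsum := h (a + b) (a - b)
  have hleft : a + b + (a - b) = (2 : ℝ) • a := by module
  have hright : a + b - (a - b) = (2 : ℝ) • b := by module
  rw [hleft, hright, norm_smul, norm_smul, Real.norm_two] at hsum
  linarith

theorem abs_parallelogram_sub_le (h : IsNeumannJordanBound X M) (a b : X) :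
    |‖a + b‖ ^ 2 + ‖a - b‖ ^ 2 - 2 * (‖a‖ ^ 2 + ‖b‖ ^ 2)| ≤
      2 * (M - 1) * (‖a‖ ^ 2 + ‖b‖ ^ 2) := by
  have hupper := h a b
  have hlower : 2 * (2 - M) * (‖a‖ ^ 2 + ‖b‖ ^ 2) ≤ ‖a + b‖ ^ 2 + ‖a - b‖ ^ 2 := by
    rcases le_total M 2 with hM | hM
    · calc
        2 * (2 - M) * (‖a‖ ^ 2 + ‖b‖ ^ 2)
          = (2 - M) * (2 * (‖a‖ ^ 2 + ‖b‖ ^ 2)) := by ring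
        _ ≤ (2 - M) * (M * (‖a + b‖ ^ 2 + ‖a - b‖ ^ 2)) :=
          mul_le_mul_of_nonneg_left (h.two_mul_le a b) (sub_nonneg.mpr hM)
        _ = (1 - (M - 1) ^ 2) * (‖a + b‖ ^ 2 + ‖a - b‖ ^ 2) := by ring
        _ ≤ ‖a + b‖ ^ 2 + ‖a - b‖ ^ 2 :=
          mul_le_of_le_one_left (by positivity) (by linarith [sq_nonneg (M - 1)])
    · calc
        2 * (2 - M) * (‖a‖ ^ 2 + ‖b‖ ^ 2) ≤ 0 :=
          mul_nonpos_of_nonpos_of_nonneg (by linarith) (by positivity)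
        _ ≤ ‖a + b‖ ^ 2 + ‖a - b‖ ^ 2 := by positivity
  rw [abs_le]
  constructor <;> linarith

theorem abs_normBracket_second_difference_le (h : IsNeumannJordanBound X M) (hM : 1 ≤ M)
    (c e y : X) :
    |normBracket (c - e) y + normBracket (c + e) y - 2 * normBracket c y| ≤
      4 * (M - 1) * (M * (‖c‖ ^ 2 + ‖y‖ ^ 2) + ‖e‖ ^ 2) := by
  let δ (a b : X) : ℝ := ‖a + b‖ ^ 2 + ‖a - b‖ ^ 2 - 2 * (‖a‖ ^ 2 + ‖b‖ ^ 2)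
  have hδ (a b : X) : |δ a b| ≤ 2 * (M - 1) * (‖a‖ ^ 2 + ‖b‖ ^ 2) :=
    h.abs_parallelogram_sub_le a b
  have hdecomp : normBracket (c - e) y + normBracket (c + e) y - 2 * normBracket c y =
      δ (c + y) e - δ (c - y) e := by
    simp only [δ, normBracket, add_right_comm c y e, sub_right_comm c y e, add_sub_right_comm c y e,
      sub_add_eq_add_sub c y e]
    ring
  calc
    |normBracket (c - e) y + normBracket (c + e) y - 2 * normBracket c y|
      = |δ (c + y) e - δ (c - y) e| := by rw [hdecomp]
    _ ≤ |δ (c + y) e| + |δ (c - y) e| := abs_sub _ _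
    _ ≤ 2 * (M - 1) * (‖c + y‖ ^ 2 + ‖e‖ ^ 2) + 2 * (M - 1) * (‖c - y‖ ^ 2 + ‖e‖ ^ 2) :=
      add_le_add (hδ _ _) (hδ _ _)
    _ = 2 * (M - 1) * (‖c + y‖ ^ 2 + ‖c - y‖ ^ 2 + 2 * ‖e‖ ^ 2) := by ring
    _ ≤ 2 * (M - 1) * (2 * M * (‖c‖ ^ 2 + ‖y‖ ^ 2) + 2 * ‖e‖ ^ 2) := by
      have := sub_nonneg.mpr hM
      gcongr
      exact h c y
    _ = 4 * (M - 1) * (M * (‖c‖ ^ 2 + ‖y‖ ^ 2) + ‖e‖ ^ 2) := by ring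

theorem abs_homogeneityDefect_second_difference_le (h : IsNeumannJordanBound X M) (hM : 1 ≤ M)
    (x y : X) (c e : ℝ) :
    |homogeneityDefect x y (c - e) + homogeneityDefect x y (c + e)
        - 2 * homogeneityDefect x y c| ≤
      4 * (M - 1) * (M * (c ^ 2 * ‖x‖ ^ 2 + ‖y‖ ^ 2) + e ^ 2 * ‖x‖ ^ 2) := by
  have hbracket := h.abs_normBracket_second_difference_le hM (c • x) (e • x) y
  simp only [← sub_smul, ← add_smul, norm_smul, mul_pow, Real.norm_eq_abs, sq_abs] at hbracket
  convert hbracket using 2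
  simp only [homogeneityDefect]
  ring

theorem abs_homogeneityDefect_le_of_mem_Icc (h : IsNeumannJordanBound X M) (hM : 1 ≤ M)
    (x y : X) {t : ℝ} (ht : t ∈ Icc 0 1) :
    |homogeneityDefect x y t| ≤ 4 * (M - 1) * (M * (‖x‖ ^ 2 + ‖y‖ ^ 2)) := by
  refine norm_le_of_norm_second_difference_le (continuous_homogeneityDefect x y).continuousOn
    (homogeneityDefect_zero x y) (homogeneityDefect_one x y) (fun c e hsub hadd ↦ ?_) ht
  have hsq : c ^ 2 + e ^ 2 ≤ 1 := by
    linarith [pow_le_one₀ (n := 2) hsub.1 hsub.2, pow_le_one₀ (n := 2) hadd.1 hadd.2,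
      add_sq c e, sub_sq c e]
  refine (h.abs_homogeneityDefect_second_difference_le hM x y c e).trans
    (mul_le_mul_of_nonneg_left ?_ (by linarith))
  calc
    M * (c ^ 2 * ‖x‖ ^ 2 + ‖y‖ ^ 2) + e ^ 2 * ‖x‖ ^ 2
      ≤ M * (c ^ 2 * ‖x‖ ^ 2 + ‖y‖ ^ 2) + M * (e ^ 2 * ‖x‖ ^ 2) := by
        have : e ^ 2 * ‖x‖ ^ 2 ≤ M * (e ^ 2 * ‖x‖ ^ 2) :=
          le_mul_of_one_le_left (by positivity) hM
        linarith
    _ = M * ((c ^ 2 + e ^ 2) * ‖x‖ ^ 2 + ‖y‖ ^ 2) := by ring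
    _ ≤ M * (‖x‖ ^ 2 + ‖y‖ ^ 2) := by
        gcongr
        exact mul_le_of_le_one_left (by positivity) hsq

end IsNeumannJordanBound

theorem bracket_scale_law_general {X : Type*} [SeminormedAddCommGroup X] [NormedSpace ℝ X] {M : ℝ}
    (h : IsNeumannJordanBound X M) (hM : 1 ≤ M) (x y : X) (t : ℝ) :
    |homogeneityDefect x y t| ≤ max 1 (t ^ 2) * (4 * (M - 1) * (M * (‖x‖ ^ 2 + ‖y‖ ^ 2))) := by
  wlog ht : 0 ≤ t generalizing t
  · simpa [homogeneityDefect_neg] using this (-t) (by linarith)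
  have hbound : 0 ≤ 4 * (M - 1) * (M * (‖x‖ ^ 2 + ‖y‖ ^ 2)) :=
    mul_nonneg (by linarith) (by positivity)
  rcases le_total t 1 with ht1 | ht1
  · exact (h.abs_homogeneityDefect_le_of_mem_Icc hM x y ⟨ht, ht1⟩).trans
      (le_mul_of_one_le_left hbound (le_max_left _ _))
  · have hinv : t⁻¹ ∈ Icc 0 1 := ⟨inv_nonneg.mpr ht, inv_le_one_of_one_le₀ ht1⟩
    calc
      |homogeneityDefect x y t|
        = t ^ 2 * |homogeneityDefect y x t⁻¹| := by
          rw [homogeneityDefect_eq_sq_mul_inv x y (by positivity), abs_mul, abs_sq]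
      _ ≤ t ^ 2 * (4 * (M - 1) * (M * (‖x‖ ^ 2 + ‖y‖ ^ 2))) := by
          rw [add_comm (‖x‖ ^ 2)]
          gcongr
          exact h.abs_homogeneityDefect_le_of_mem_Icc hM y x hinv
      _ ≤ max 1 (t ^ 2) * (4 * (M - 1) * (M * (‖x‖ ^ 2 + ‖y‖ ^ 2))) := by
          gcongr
          exact le_max_right _ _

/-- **Approximate homogeneity of the bracket** (Lemma 2.4). For a real normed vector
space with von Neumann–Jordan constant at most `ε + 1`, with `[a, b] = ‖a+b‖² − ‖a−b‖²`,
`|[t·x, y] − t·[x, y]| ≤ max{1, t²}·ε·[(8 + 7ε)‖x‖² + (20 + 20ε)‖y‖²]`. -/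
theorem bracket_scale_law {X : Type*} [NormedAddCommGroup X] [NormedSpace ℝ X]
    (ε : ℝ) (hε : 0 ≤ ε)
    (hJ : ∀ a b : X, ¬(a = 0 ∧ b = 0) →
      1 / (ε + 1) ≤ (‖a + b‖ ^ 2 + ‖a - b‖ ^ 2) / (2 * (‖a‖ ^ 2 + ‖b‖ ^ 2)) ∧
      (‖a + b‖ ^ 2 + ‖a - b‖ ^ 2) / (2 * (‖a‖ ^ 2 + ‖b‖ ^ 2)) ≤ ε + 1) :
    ∀ (x y : X) (t : ℝ),
      |(‖t • x + y‖ ^ 2 - ‖t • x - y‖ ^ 2) - t * (‖x + y‖ ^ 2 - ‖x - y‖ ^ 2)| ≤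
        max 1 (t ^ 2) * ε * ((8 + 7 * ε) * ‖x‖ ^ 2 + (20 + 20 * ε) * ‖y‖ ^ 2) := by
  intro x y t
  have hX : IsNeumannJordanBound X (ε + 1) := .of_div_le fun a b hab ↦ (hJ a b hab).2
  calc
    _ ≤ max 1 (t ^ 2) * (4 * (ε + 1 - 1) * ((ε + 1) * (‖x‖ ^ 2 + ‖y‖ ^ 2))) :=
      bracket_scale_law_general hX (by linarith) x y t
    _ = max 1 (t ^ 2) * ε * ((4 + 4 * ε) * ‖x‖ ^ 2 + (4 + 4 * ε) * ‖y‖ ^ 2) := by ring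
    _ ≤ _ := by gcongr <;> linarith
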